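/- Assume ‖β*‖_∞ ≤ B for some B > 0, λ₁ = 8B·λ₂, and ε_n ≥ 0. Let Σ = ∫ x·xᵀ dQ(x,y) and suppose: (i) (P_n − P)(l₁(β*,·,·) − l₁(β̂,·,·)) ≤ (λ₁/4)·‖β̂ − β*‖₁ and (P_n − P)(l₂(β*,·) − l₂(β̂,·)) ≤ (λ₁/4)·(‖β̂ − β*‖₁ + ε_n); (ii) there is a > 0 with P l(β̂,·,·) − P l(β*,·,·) ≥ a·(β̂ − β*)ᵀ·Σ·(β̂ − β*); (iii) the Stabil condition holds: for every b ∈ ℝ^p with ∑_{j∉H}|b_j| ≤ 3.5·∑_{j∈H}|b_j| + ε_n/2 one has bᵀ·Σ·b ≥ k·∑_{j∈H} b_j² − ε_n/2, where 0 < k < 1. Then ‖β̂ − β*‖₁ ≤ (2.25)²·λ₁·d*/(a·k + 2λ₂) + (1 + a/λ₁)·ε_n. -/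

import Mathlib

open Real BigOperators Finset MeasureTheory

/-- Inner product. -/
def dotp {p : ℕ} (u v : Fin p → ℝ) : ℝ := ∑ j, u j * v j

/-- Negative binomial loss `l(β,x,y)`. -/
noncomputable def nbLoss (p : ℕ) (θ : ℝ) (β x : Fin p → ℝ) (y : ℝ) : ℝ :=
  -y * dotp x β + (θ + y) * Real.log (θ + Real.exp (dotp x β))

/-- First part `l₁(β,x,y)` of the loss. -/
noncomputable def nbLoss1 (p : ℕ) (θ : ℝ) (β x : Fin p → ℝ) (y : ℝ) : ℝ :=
  -y * (dotp x β - Real.log (θ + Real.exp (dotp x β)))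

/-- Second part `l₂(β,x)` of the loss. -/
noncomputable def nbLoss2 (p : ℕ) (θ : ℝ) (β x : Fin p → ℝ) : ℝ :=
  θ * Real.log (θ + Real.exp (dotp x β))

/-!
Comparing the penalised empirical risks of `β̂` and `β*` bounds the excess risk `E` of `β̂` by an
inequality between three quantities: the `ℓ¹` errors `S` on the support and `T` off it, and the
squared `ℓ²` error `G` on the support. The empirical process consumes half of the penalty `λ₁ T`,
and shrinkage towards `0` rather than `β*` costs at most `2Bλ₂S ≤ λ₁S/4`, so that
`E + λ₂G ≤ λ₁(7S/4 - T/2 + ε/4)`. Since `E ≥ 0`, the error lies in the cone of the Stabil condition,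
which gives `E ≥ a(kG - ε/2)`. The resulting bound on `S + T` contains `4.5 λ₁S - 2(ak + λ₂)G`,
and completing the square in each coordinate of the support bounds this by a multiple of `d*`.
-/

section EmpiricalDeviation

variable {Z : Type*} [MeasurableSpace Z] {n : ℕ} {Q : Measure Z} {z : Fin n → Z} {f g : Z → ℝ}

/-- The centred empirical functional `(P_n - P) f` of a sample `z` and a population law `Q`. The
sample average of an empty sample is `0`. -/
noncomputable def empiricalDeviation (Q : Measure Z) (z : Fin n → Z) (f : Z → ℝ) : ℝ :=
  (1 / (n : ℝ)) * ∑ i, f (z i) - ∫ x, f x ∂Q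

lemma empiricalDeviation_add (hf : Integrable f Q) (hg : Integrable g Q) :
    empiricalDeviation Q z (fun x => f x + g x) =
      empiricalDeviation Q z f + empiricalDeviation Q z g := by
  simp only [empiricalDeviation, integral_add hf hg, sum_add_distrib]
  ring

lemma empiricalDeviation_sub (hf : Integrable f Q) (hg : Integrable g Q) :
    empiricalDeviation Q z (fun x => f x - g x) =
      empiricalDeviation Q z f - empiricalDeviation Q z g := by
  simp only [empiricalDeviation, integral_sub hf hg, sum_sub_distrib]
  ring

end EmpiricalDeviation

section NegativeBinomialLoss

variable {p n : ℕ} {θ : ℝ} {Q : Measure ((Fin p → ℝ) × ℝ)} {z : Fin n → (Fin p → ℝ) × ℝ}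

lemma nbLoss_eq_nbLoss1_add_nbLoss2 (β x : Fin p → ℝ) (y : ℝ) :
    nbLoss p θ β x y = nbLoss1 p θ β x y + nbLoss2 p θ β x := by
  unfold nbLoss nbLoss1 nbLoss2
  ring

lemma empiricalDeviation_nbLoss_sub_empiricalDeviation_nbLoss
    (h₁ : ∀ β : Fin p → ℝ, Integrable (fun w => nbLoss1 p θ β w.1 w.2) Q)
    (h₂ : ∀ β : Fin p → ℝ, Integrable (fun w => nbLoss2 p θ β w.1) Q) (β β' : Fin p → ℝ) :
    empiricalDeviation Q z (fun w => nbLoss p θ β w.1 w.2) -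
        empiricalDeviation Q z (fun w => nbLoss p θ β' w.1 w.2) =
      empiricalDeviation Q z (fun w => nbLoss1 p θ β w.1 w.2 - nbLoss1 p θ β' w.1 w.2) +
        empiricalDeviation Q z (fun w => nbLoss2 p θ β w.1 - nbLoss2 p θ β' w.1) := by
  simp only [nbLoss_eq_nbLoss1_add_nbLoss2, empiricalDeviation_add (h₁ _) (h₂ _),
    empiricalDeviation_sub (h₁ _) (h₁ _), empiricalDeviation_sub (h₂ _) (h₂ _)]
  ring

end NegativeBinomialLoss

lemma mul_sum_abs_sub_mul_sum_sq_le {ι : Type*} (s : Finset ι) (b : ι → ℝ) (c : ℝ) {m : ℝ}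
    (hm : 0 < m) :
    c * ∑ j ∈ s, |b j| - m * ∑ j ∈ s, b j ^ 2 ≤ s.card * (c ^ 2 / (4 * m)) := by
  have hcoord : ∀ t : ℝ, c * |t| - m * t ^ 2 ≤ c ^ 2 / (4 * m) := fun t => by
    rw [le_div_iff₀ (by positivity), ← sq_abs t]
    linarith [sq_nonneg (c - 2 * m * |t|)]
  rw [mul_sum, mul_sum, ← sum_sub_distrib, ← nsmul_eq_mul]
  exact sum_le_card_nsmul _ _ _ fun j _ => hcoord (b j)

lemma sq_sub_sq_le_of_abs_le {s t B : ℝ} (ht : |t| ≤ B) :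
    t ^ 2 - s ^ 2 ≤ 2 * B * |s - t| - (s - t) ^ 2 := by
  have hcross : -(t * (s - t)) ≤ B * |s - t| :=
    calc -(t * (s - t)) ≤ |t| * |s - t| := (neg_le_abs _).trans_eq (abs_mul _ _)
      _ ≤ B * |s - t| := by gcongr
  linarith

section ElasticNet

variable {ι : Type*} [Fintype ι] {lam1 lam2 B : ℝ}

/-- The elastic net penalty `λ₁‖β‖₁ + λ₂‖β‖₂²`. -/
def elasticNet (lam1 lam2 : ℝ) (β : ι → ℝ) : ℝ :=
  lam1 * ∑ j, |β j| + lam2 * ∑ j, β j ^ 2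

variable [DecidableEq ι] {H : Finset ι} {β β' : ι → ℝ}

lemma elasticNet_sub_elasticNet_le (hlam1 : 0 ≤ lam1) (hlam2 : 0 ≤ lam2)
    (hβH : ∀ j ∉ H, β j = 0) (hβB : ∀ j ∈ H, |β j| ≤ B) :
    elasticNet lam1 lam2 β - elasticNet lam1 lam2 β' ≤
      (lam1 + 2 * B * lam2) * ∑ j ∈ H, |β' j - β j| - lam2 * ∑ j ∈ H, (β' j - β j) ^ 2
        - lam1 * ∑ j ∈ Hᶜ, |β' j - β j| := by
  have hl1_on : ∑ j ∈ H, |β j| - ∑ j ∈ H, |β' j| ≤ ∑ j ∈ H, |β' j - β j| := by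
    rw [← sum_sub_distrib]
    exact sum_le_sum fun j _ => abs_sub_comm (β' j) (β j) ▸ abs_sub_abs_le_abs_sub _ _
  have hl2_on : ∑ j ∈ H, β j ^ 2 - ∑ j ∈ H, β' j ^ 2 ≤
      2 * B * ∑ j ∈ H, |β' j - β j| - ∑ j ∈ H, (β' j - β j) ^ 2 := by
    rw [mul_sum, ← sum_sub_distrib, ← sum_sub_distrib]
    exact sum_le_sum fun j hj => sq_sub_sq_le_of_abs_le (hβB j hj)
  have hβ_off : ∀ j ∈ Hᶜ, β j = 0 := fun j hj => hβH j (mem_compl.mp hj)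
  have hl1_off : ∑ j ∈ Hᶜ, |β j| - ∑ j ∈ Hᶜ, |β' j| = -∑ j ∈ Hᶜ, |β' j - β j| := by
    rw [← sum_sub_distrib, ← sum_neg_distrib]
    exact sum_congr rfl fun j hj => by simp [hβ_off j hj]
  have hl2_off : ∑ j ∈ Hᶜ, β j ^ 2 - ∑ j ∈ Hᶜ, β' j ^ 2 ≤ 0 := by
    rw [← sum_sub_distrib]
    exact sum_nonpos fun j hj => by simp [hβ_off j hj, sq_nonneg]
  have hl1 := mul_le_mul_of_nonneg_left (add_le_add hl1_on hl1_off.le) hlam1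
  have hl2 := mul_le_mul_of_nonneg_left (add_le_add hl2_on hl2_off) hlam2
  simp only [elasticNet, ← sum_add_sum_compl H]
  linarith

/-- The Stabil condition: `q` controls `k` times the squared `ℓ²` norm on `H`, up to `ε`, on the
cone of all `b` with `‖b_{Hᶜ}‖₁ ≤ c ‖b_H‖₁ + ε`. The form `b ↦ bᵀ Σ b` is represented by an
arbitrary function `q`. -/
def Stabil (q : (ι → ℝ) → ℝ) (H : Finset ι) (c k ε : ℝ) : Prop :=
  ∀ b : ι → ℝ, ∑ j ∈ Hᶜ, |b j| ≤ c * ∑ j ∈ H, |b j| + ε → k * ∑ j ∈ H, b j ^ 2 - ε ≤ q b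

variable {R Rn q : (ι → ℝ) → ℝ} {ε a k : ℝ}

lemma excessRisk_add_le (hlam1 : 0 ≤ lam1) (hlam2 : 0 ≤ lam2)
    (hβH : ∀ j ∉ H, β j = 0) (hβB : ∀ j ∈ H, |β j| ≤ B) (hB : 8 * B * lam2 ≤ lam1)
    (hmin : Rn β' + elasticNet lam1 lam2 β' ≤ Rn β + elasticNet lam1 lam2 β)
    (hdev : (Rn β - R β) - (Rn β' - R β') ≤ lam1 / 2 * ∑ j, |β' j - β j| + lam1 / 4 * ε) :
    R β' - R β + lam2 * ∑ j ∈ H, (β' j - β j) ^ 2 ≤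
      lam1 * (7 / 4 * ∑ j ∈ H, |β' j - β j| - 1 / 2 * ∑ j ∈ Hᶜ, |β' j - β j| + ε / 4) := by
  have hpen := elasticNet_sub_elasticNet_le (β' := β') hlam1 hlam2 hβH hβB
  have hshrink : 8 * B * lam2 * ∑ j ∈ H, |β' j - β j| ≤ lam1 * ∑ j ∈ H, |β' j - β j| := by
    gcongr
  rw [← sum_add_sum_compl H] at hdev
  linarith

/-- `R` and `Rn` stand for the population and the empirical risk, `q` for `b ↦ bᵀ Σ b`, and `β`
and `β'` for `β*` and `β̂`. -/
theorem stmt11_general (hlam1 : 0 < lam1) (hlam2 : 0 ≤ lam2)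
    (hβH : ∀ j ∉ H, β j = 0) (hβB : ∀ j ∈ H, |β j| ≤ B) (hB : 8 * B * lam2 ≤ lam1)
    (hmin : Rn β' + elasticNet lam1 lam2 β' ≤ Rn β + elasticNet lam1 lam2 β)
    (hdev : (Rn β - R β) - (Rn β' - R β') ≤ lam1 / 2 * ∑ j, |β' j - β j| + lam1 / 4 * ε)
    (ha : 0 ≤ a) (hq : ∀ b, 0 ≤ q b) (hquad : a * q (β' - β) ≤ R β' - R β)
    (hstabil : Stabil q H 3.5 k (ε / 2)) (hak : 0 < a * k + lam2) :
    ∑ j, |β' j - β j| ≤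
      2.25 ^ 2 * lam1 * H.card / (2 * (a * k + lam2)) + (1 / 2 + a / lam1) * ε := by
  have hbasic := excessRisk_add_le hlam1.le hlam2 hβH hβB hB hmin hdev
  have hsquare := mul_sum_abs_sub_mul_sum_sq_le H (β' - β) (4.5 * lam1)
    (m := 2 * (a * k + lam2)) (by positivity)
  simp only [Pi.sub_apply] at hsquare
  rw [← sum_add_sum_compl H]
  set S := ∑ j ∈ H, |β' j - β j|
  set T := ∑ j ∈ Hᶜ, |β' j - β j|
  set G := ∑ j ∈ H, (β' j - β j) ^ 2
  have hexcess : 0 ≤ R β' - R β := (mul_nonneg ha (hq _)).trans hquad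
  have hcone : T ≤ 3.5 * S + ε / 2 := by
    have hG_nonneg : 0 ≤ lam2 * G := mul_nonneg hlam2 (sum_nonneg fun _ _ => sq_nonneg _)
    have := nonneg_of_mul_nonneg_right ((add_nonneg hexcess hG_nonneg).trans hbasic) hlam1
    linarith
  have hlower : a * (k * G - ε / 2) ≤ R β' - R β :=
    (mul_le_mul_of_nonneg_left (hstabil _ hcone) ha).trans hquad
  refine le_of_mul_le_mul_left ?_ hlam1
  calc lam1 * (S + T)
      ≤ 4.5 * lam1 * S - 2 * (a * k + lam2) * G + (lam1 / 2 + a) * ε := by linarith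
    _ ≤ H.card * ((4.5 * lam1) ^ 2 / (4 * (2 * (a * k + lam2)))) + (lam1 / 2 + a) * ε := by
        gcongr
    _ = lam1 * (2.25 ^ 2 * lam1 * H.card / (2 * (a * k + lam2)) + (1 / 2 + a / lam1) * ε) := by
        field_simp
        ring

end ElasticNet

theorem stmt11
    (n p : ℕ) (hn : 1 ≤ n) (hp : 1 ≤ p)
    (θ L : ℝ) (hθ : 0 < θ) (hL : 0 < L)
    (Q : Measure ((Fin p → ℝ) × ℝ)) [IsProbabilityMeasure Q]
    (hsupp : ∀ᵐ z ∂Q, (∀ j, |z.1 j| ≤ L) ∧ 0 ≤ z.2)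
    (hInt : ∀ β : Fin p → ℝ, Integrable (fun z => nbLoss p θ β z.1 z.2) Q)
    (hInt1 : ∀ β : Fin p → ℝ, Integrable (fun z => nbLoss1 p θ β z.1 z.2) Q)
    (hInt2 : ∀ β : Fin p → ℝ, Integrable (fun z => nbLoss2 p θ β z.1) Q)
    (xs : Fin n → Fin p → ℝ) (ys : Fin n → ℝ)
    (hxs : ∀ i j, |xs i j| ≤ L) (hys : ∀ i, 0 ≤ ys i)
    (lam1 lam2 : ℝ) (hlam1 : 0 < lam1) (hlam2 : 0 < lam2)
    (betas : Fin p → ℝ)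
    (hbetas : ∀ β : Fin p → ℝ,
      ∫ z, nbLoss p θ betas z.1 z.2 ∂Q ≤ ∫ z, nbLoss p θ β z.1 z.2 ∂Q)
    (H : Finset (Fin p)) (hH : H = Finset.univ.filter (fun j => betas j ≠ 0))
    (betah : Fin p → ℝ)
    (hbetah : ∀ β : Fin p → ℝ,
      (1 / (n : ℝ)) * (∑ i, nbLoss p θ betah (xs i) (ys i))
          + lam1 * ∑ j, |betah j| + lam2 * ∑ j, (betah j) ^ 2
        ≤ (1 / (n : ℝ)) * (∑ i, nbLoss p θ β (xs i) (ys i))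
          + lam1 * ∑ j, |β j| + lam2 * ∑ j, (β j) ^ 2)
    (B : ℝ) (hBpos : 0 < B) (hB : ∀ j, |betas j| ≤ B)
    (hlam12 : lam1 = 8 * B * lam2)
    (eps : ℝ) (heps : 0 ≤ eps)
    (hemp1 : (1 / (n : ℝ)) * (∑ i, (nbLoss1 p θ betas (xs i) (ys i)
            - nbLoss1 p θ betah (xs i) (ys i)))
          - ∫ z, (nbLoss1 p θ betas z.1 z.2 - nbLoss1 p θ betah z.1 z.2) ∂Q
        ≤ lam1 / 4 * ∑ j, |betah j - betas j|)
    (hemp2 : (1 / (n : ℝ)) * (∑ i, (nbLoss2 p θ betas (xs i)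
            - nbLoss2 p θ betah (xs i)))
          - ∫ z, (nbLoss2 p θ betas z.1 - nbLoss2 p θ betah z.1) ∂Q
        ≤ lam1 / 4 * ((∑ j, |betah j - betas j|) + eps))
    (a : ℝ) (ha : 0 < a)
    (hquad : ∫ z, nbLoss p θ betah z.1 z.2 ∂Q - ∫ z, nbLoss p θ betas z.1 z.2 ∂Q
        ≥ a * ∫ z, (∑ j, z.1 j * (betah j - betas j)) ^ 2 ∂Q)
    (k : ℝ) (hk0 : 0 < k) (hk1 : k < 1)
    (hstabil : ∀ b : Fin p → ℝ,
      (∑ j ∈ Hᶜ, |b j|) ≤ 3.5 * (∑ j ∈ H, |b j|) + eps / 2 →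
      ∫ z, (∑ j, z.1 j * b j) ^ 2 ∂Q ≥ k * (∑ j ∈ H, (b j) ^ 2) - eps / 2) :
    ∑ j, |betah j - betas j|
      ≤ 2.25 ^ 2 * lam1 * (H.card : ℝ) / (a * k + 2 * lam2) + (1 + a / lam1) * eps := by
  have hdev := (empiricalDeviation_nbLoss_sub_empiricalDeviation_nbLoss
    (z := fun i => (xs i, ys i)) hInt1 hInt2 betas betah).trans_le (add_le_add hemp1 hemp2)
  have hoff : ∀ j ∉ H, betas j = 0 := by simp [hH]
  refine (stmt11_general (B := B) (ε := eps) (k := k)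
    (Rn := fun β => (1 / (n : ℝ)) * ∑ i, nbLoss p θ β (xs i) (ys i))
    (R := fun β => ∫ z, nbLoss p θ β z.1 z.2 ∂Q)
    (q := fun b => ∫ z, (∑ j, z.1 j * b j) ^ 2 ∂Q)
    hlam1 hlam2.le hoff (fun j _ => hB j) hlam12.ge
    (by simpa only [elasticNet, ← add_assoc] using hbetah betas)
    (hdev.trans (by linarith)) ha.le (fun b => integral_nonneg fun z => sq_nonneg _)
    hquad hstabil (by positivity)).trans ?_
  gcongr _ / ?_ + (?_ + _) * _
  · linarith [mul_pos ha hk0]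
  · norm_num
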